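/- arXiv:1601.03678 — 2 statements merged into one kernel-verified Lean document; each statement's English description precedes it below -/
import Mathlib

section
/- Let n >= 2 and let v be a random vector uniformly distributed on the unit sphere S^{n-1} of R^n. Then for any 0 <= c < 1 and any a > 1, with probability at least exp(-2c) - exp(-((a^2 - sqrt(2a^2 - 1))/2) n), the smallest coordinate in absolute value satisfies ||v||_min >= (c/a) n^{-3/2}. -/
open MeasureTheory

/-- A measure `μ` on `ℝⁿ` is the uniform (rotation-invariant) probability distribution on the
unit sphere `S^{n-1}`. -/
def IsUniformOnSphere {n : ℕ} (μ : Measure (EuclideanSpace ℝ (Fin n))) : Prop :=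
  IsProbabilityMeasure μ ∧
  μ (Metric.sphere (0 : EuclideanSpace ℝ (Fin n)) 1) = 1 ∧
  ∀ O : EuclideanSpace ℝ (Fin n) ≃ₗᵢ[ℝ] EuclideanSpace ℝ (Fin n),
    Measure.map O μ = μ

/-!
For a rotation-invariant probability measure without atom at the origin, the law of the angle to a
fixed vector does not depend on the measure: integrating over two independent vectors in either
order gives the same number. So `P(|vᵢ| < t) = P(|gᵢ| < t ‖g‖)` for a standard Gaussian vector `g`.
With `h` the remaining `n - 1` coordinates of `g`, the latter event is `|gᵢ| < s ‖h‖`, where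
`s = t / √(1 - t²)`. Since `gᵢ` is independent of `h` and has density at most `1 / √(2π)`, the
probability is at most `√(2/π) s E‖h‖ ≤ √(2/π) s √(n - 1) ≤ √(2/π) t √n` when `n t² < 1`. For
`t = c n^(-3/2)` the union bound over `i` leaves at least `1 - √(2/π) c`, which is at least
`exp (-2c)` on `[0, 1]` by convexity.
-/

open Module ProbabilityTheory Real WithLp
open scoped ENNReal NNReal RealInnerProductSpace

section GaussianReal

lemma gaussianPDF_le (m : ℝ) (v : ℝ≥0) (x : ℝ) :
    gaussianPDF m v x ≤ ENNReal.ofReal (√(2 * π * v))⁻¹ := by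
  refine ENNReal.ofReal_le_ofReal (mul_le_of_le_one_right (by positivity) (exp_le_one_iff.2 ?_))
  exact div_nonpos_of_nonpos_of_nonneg (neg_nonpos.2 (sq_nonneg _)) (by positivity)

lemma gaussianReal_ball_le (m : ℝ) {v : ℝ≥0} (hv : v ≠ 0) (x r : ℝ) :
    gaussianReal m v (Metric.ball x r) ≤ ENNReal.ofReal (√(2 / (π * v)) * r) := by
  have hconst : (√(2 * π * v))⁻¹ * 2 = √(2 / (π * v)) := by
    rw [eq_comm, sqrt_eq_iff_mul_self_eq (by positivity) (by positivity), mul_mul_mul_comm,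
      ← mul_inv, mul_self_sqrt (by positivity)]
    field
  calc gaussianReal m v (Metric.ball x r)
      = ∫⁻ y in Metric.ball x r, gaussianPDF m v y := gaussianReal_apply m hv _
    _ ≤ ∫⁻ _ in Metric.ball x r, ENNReal.ofReal (√(2 * π * v))⁻¹ :=
        lintegral_mono (gaussianPDF_le m v)
    _ = ENNReal.ofReal (√(2 / (π * v)) * r) := by
        rw [setLIntegral_const, volume_ball, ← ENNReal.ofReal_mul (by positivity), ← mul_assoc,
          hconst]

lemma gaussianReal_prod_abs_fst_lt_le {Ω : Type*} [MeasurableSpace Ω] (ν : Measure Ω) [SFinite ν]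
    {f : Ω → ℝ} (hf : Measurable f) (hf_nonneg : 0 ≤ f) (hf_int : Integrable f ν) :
    ((gaussianReal 0 1).prod ν) {p | |p.1| < f p.2} ≤ ENNReal.ofReal (√(2 / π) * ∫ y, f y ∂ν) := by
  have hT : MeasurableSet {p : ℝ × Ω | |p.1| < f p.2} :=
    measurableSet_lt (by fun_prop) (by fun_prop)
  have hslice (y : Ω) : gaussianReal 0 1 {x | |x| < f y} ≤ ENNReal.ofReal (√(2 / π) * f y) := by
    simpa [Metric.ball, dist_eq] using gaussianReal_ball_le 0 one_ne_zero 0 (f y)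
  calc ((gaussianReal 0 1).prod ν) {p | |p.1| < f p.2}
      = ∫⁻ y, gaussianReal 0 1 {x | |x| < f y} ∂ν := Measure.prod_apply_symm hT
    _ ≤ ∫⁻ y, ENNReal.ofReal (√(2 / π) * f y) ∂ν := lintegral_mono hslice
    _ = ENNReal.ofReal (√(2 / π) * ∫ y, f y ∂ν) := by
        rw [← integral_const_mul, ofReal_integral_eq_lintegral_ofReal (hf_int.const_mul _)
          (.of_forall fun y ↦ mul_nonneg (sqrt_nonneg _) (hf_nonneg y))]

end GaussianReal

section StdGaussian

variable {E : Type*} [NormedAddCommGroup E] [InnerProductSpace ℝ E] [FiniteDimensional ℝ E]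
  [MeasurableSpace E] [BorelSpace E]

lemma stdGaussian_map_strongDual (L : StrongDual ℝ E) :
    (stdGaussian E).map L = gaussianReal 0 (‖L‖ ^ 2).toNNReal := by
  rw [IsGaussian.map_eq_gaussianReal, integral_strongDual_stdGaussian, variance_dual_stdGaussian]

lemma nullSingletonClass_stdGaussian [Nontrivial E] : NullSingletonClass (stdGaussian E) where
  measure_singleton x := by
    obtain ⟨L, hL⟩ := exists_ne (0 : StrongDual ℝ E)
    have := nullSingletonClass_gaussianReal (μ := 0) (v := (‖L‖ ^ 2).toNNReal) (by simpa using hL)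
    have hpre : stdGaussian E (L ⁻¹' {L x}) = 0 := by
      rw [← Measure.map_apply (by fun_prop) (measurableSet_singleton _),
        stdGaussian_map_strongDual, measure_singleton]
    exact measure_mono_null (by simp) hpre

lemma integral_inner_sq_stdGaussian (u : E) : ∫ x, ⟪u, x⟫ ^ 2 ∂stdGaussian E = ‖u‖ ^ 2 := by
  have hvar := variance_dual_stdGaussian (innerSL ℝ u)
  rwa [variance_of_integral_eq_zero (by fun_prop) (integral_strongDual_stdGaussian _),
    innerSL_apply_norm] at hvar

variable (E) in
lemma integral_norm_sq_stdGaussian : ∫ x, ‖x‖ ^ 2 ∂stdGaussian E = finrank ℝ E := by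
  let b := stdOrthonormalBasis ℝ E
  have hint (i) : Integrable (fun x ↦ ⟪b i, x⟫ ^ 2) (stdGaussian E) :=
    ((IsGaussian.memLp_two_id (μ := stdGaussian E)).const_inner (b i)).integrable_sq
  calc ∫ x, ‖x‖ ^ 2 ∂stdGaussian E = ∫ x, ∑ i, ⟪b i, x⟫ ^ 2 ∂stdGaussian E := by
        simp only [b.sum_sq_inner_right]
    _ = ∑ i, ∫ x, ⟪b i, x⟫ ^ 2 ∂stdGaussian E := integral_finsetSum _ fun i _ ↦ hint i
    _ = finrank ℝ E := by simp [integral_inner_sq_stdGaussian]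

variable (E) in
lemma integral_norm_stdGaussian_le : ∫ x, ‖x‖ ∂stdGaussian E ≤ √(finrank ℝ E) := by
  refine le_sqrt_of_sq_le ?_
  have hmem : MemLp (fun x : E ↦ ‖x‖) 2 (stdGaussian E) := IsGaussian.memLp_two_id.norm
  have hvar := variance_nonneg (fun x : E ↦ ‖x‖) (stdGaussian E)
  rw [variance_eq_sub hmem] at hvar
  rw [← integral_norm_sq_stdGaussian]
  exact sub_nonneg.1 hvar

variable (E) in
lemma map_gaussianReal_prod_stdGaussian :
    ((gaussianReal 0 1).prod (stdGaussian E)).map (toLp 2) = stdGaussian (WithLp 2 (ℝ × E)) := by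
  refine Measure.ext_of_charFun (funext fun p ↦ ?_)
  rw [charFun_prod, charFun_gaussianReal, charFun_stdGaussian, charFun_stdGaussian,
    ← Complex.exp_add]
  congr 1
  rw [← Complex.ofReal_pow ‖p‖, prod_norm_sq_eq_of_L2]
  simp only [ofLp_fst, ofLp_snd, Complex.ofReal_zero, mul_zero, zero_mul, NNReal.coe_one,
    Complex.ofReal_one, one_mul, zero_sub, norm_eq_abs, sq_abs, Complex.ofReal_add,
    Complex.ofReal_pow, neg_add_rev]
  ring

end StdGaussian

section EquatorialBand

variable {E F : Type*} [NormedAddCommGroup E] [InnerProductSpace ℝ E]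
  [NormedAddCommGroup F] [InnerProductSpace ℝ F] {t : ℝ}

lemma exists_linearIsometryEquiv_apply_eq {u v : E} (h : ‖u‖ = ‖v‖) : ∃ O : E ≃ₗᵢ[ℝ] E, O u = v :=
  ⟨(ℝ ∙ (u - v))ᗮ.reflection, Submodule.reflection_sub h⟩

/-- The cone over the band of half-width `t` around the equator orthogonal to `u`: the vectors whose
angle with `u` has cosine of absolute value less than `t`. It does not contain `0`. -/
def equatorialBand (t : ℝ) (u : E) : Set E := {x | |⟪x, u⟫| < t * (‖x‖ * ‖u‖)}

lemma mem_equatorialBand {u x : E} : x ∈ equatorialBand t u ↔ |⟪x, u⟫| < t * (‖x‖ * ‖u‖) :=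
  Iff.rfl

lemma mem_equatorialBand_comm {u x : E} : x ∈ equatorialBand t u ↔ u ∈ equatorialBand t x := by
  rw [mem_equatorialBand, mem_equatorialBand, real_inner_comm, mul_comm ‖x‖]

lemma equatorialBand_smul {r : ℝ} (hr : r ≠ 0) (u : E) :
    equatorialBand t (r • u) = equatorialBand t u := by
  ext x
  rw [mem_equatorialBand, mem_equatorialBand, inner_smul_right, norm_smul, abs_mul, norm_eq_abs,
    mul_left_comm ‖x‖, mul_left_comm t, mul_lt_mul_iff_right₀ (abs_pos.2 hr)]

lemma preimage_equatorialBand (f : E ≃ₗᵢ[ℝ] F) (u : E) :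
    f ⁻¹' equatorialBand t (f u) = equatorialBand t u := by
  ext x
  simp only [Set.mem_preimage, mem_equatorialBand, f.inner_map_map, f.norm_map]

lemma measurableSet_setOf_mem_equatorialBand [MeasurableSpace E] [OpensMeasurableSpace E]
    [SecondCountableTopology E] (t : ℝ) :
    MeasurableSet {p : E × E | p.1 ∈ equatorialBand t p.2} := by
  simp only [mem_equatorialBand]
  exact measurableSet_lt (by fun_prop) (by fun_prop)

end EquatorialBand

section RotationInvariant

variable {E : Type*} [NormedAddCommGroup E] [InnerProductSpace ℝ E] [MeasurableSpace E]
  [BorelSpace E] {μ ν : Measure E} {t : ℝ} {u v : E}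

/-- Invariance of a measure under all linear isometries of the space, orientation-reversing ones
included. -/
def IsRotationInvariant (μ : Measure E) : Prop :=
  ∀ O : E ≃ₗᵢ[ℝ] E, μ.map O = μ

lemma isRotationInvariant_stdGaussian [FiniteDimensional ℝ E] :
    IsRotationInvariant (stdGaussian E) :=
  stdGaussian_map

namespace IsRotationInvariant

lemma measure_equatorialBand_eq (hμ : IsRotationInvariant μ) (hu : u ≠ 0) (hv : v ≠ 0) :
    μ (equatorialBand t u) = μ (equatorialBand t v) := by
  have hr : ‖u‖ / ‖v‖ ≠ 0 := div_ne_zero (norm_ne_zero_iff.2 hu) (norm_ne_zero_iff.2 hv)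
  obtain ⟨O, hO⟩ : ∃ O : E ≃ₗᵢ[ℝ] E, O u = (‖u‖ / ‖v‖) • v := by
    refine exists_linearIsometryEquiv_apply_eq ?_
    rw [norm_smul, norm_div, norm_norm, norm_norm, div_mul_cancel₀ _ (norm_ne_zero_iff.2 hv)]
  calc μ (equatorialBand t u)
      = μ (O ⁻¹' equatorialBand t (O u)) := by rw [preimage_equatorialBand]
    _ = μ.map O (equatorialBand t (O u)) := (O.toMeasurableEquiv.map_apply _).symm
    _ = μ (equatorialBand t v) := by rw [hμ O, hO, equatorialBand_smul hr]

lemma lintegral_measure_equatorialBand (hμ : IsRotationInvariant μ) [IsProbabilityMeasure ν]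
    (hν : ν {0} = 0) (hv : v ≠ 0) :
    ∫⁻ x, μ (equatorialBand t x) ∂ν = μ (equatorialBand t v) := by
  have hae : ∀ᵐ x ∂ν, μ (equatorialBand t x) = μ (equatorialBand t v) := by
    filter_upwards [compl_mem_ae_iff.2 hν] with x hx
    exact hμ.measure_equatorialBand_eq hx hv
  simp [lintegral_congr_ae hae]

lemma measure_equatorialBand_congr [SecondCountableTopology E] (hμ : IsRotationInvariant μ)
    (hν : IsRotationInvariant ν) [IsProbabilityMeasure μ] [IsProbabilityMeasure ν]
    (hμ0 : μ {0} = 0) (hν0 : ν {0} = 0) (hu : u ≠ 0) :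
    μ (equatorialBand t u) = ν (equatorialBand t u) := by
  have hT := measurableSet_setOf_mem_equatorialBand (E := E) t
  calc μ (equatorialBand t u)
      = ∫⁻ y, μ (equatorialBand t y) ∂ν := (hμ.lintegral_measure_equatorialBand hν0 hu).symm
    _ = (μ.prod ν) {p | p.1 ∈ equatorialBand t p.2} := (Measure.prod_apply_symm hT).symm
    _ = ∫⁻ x, ν {y | x ∈ equatorialBand t y} ∂μ := Measure.prod_apply hT
    _ = ∫⁻ x, ν (equatorialBand t x) ∂μ := by simp only [mem_equatorialBand_comm, Set.ofPred_mem_eq]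
    _ = ν (equatorialBand t u) := hν.lintegral_measure_equatorialBand hμ0 hu

end IsRotationInvariant

end RotationInvariant

section BandBound

variable {E : Type*} [NormedAddCommGroup E] [InnerProductSpace ℝ E] [FiniteDimensional ℝ E]
  [MeasurableSpace E] [BorelSpace E] {t : ℝ}

lemma abs_lt_div_sqrt_one_sub_sq_mul {a r t : ℝ} (ht : 0 ≤ t) (ht1 : t ^ 2 < 1) (hr : 0 ≤ r)
    (h : |a| < t * √(a ^ 2 + r ^ 2)) : |a| < t / √(1 - t ^ 2) * r := by
  have hpos : 0 < 1 - t ^ 2 := sub_pos.2 ht1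
  have hsq : a ^ 2 < t ^ 2 * (a ^ 2 + r ^ 2) := by
    simpa [mul_pow, sq_sqrt (add_nonneg (sq_nonneg a) (sq_nonneg r))] using
      pow_lt_pow_left₀ h (abs_nonneg a) two_ne_zero
  refine abs_lt_of_sq_lt_sq ?_ (by positivity)
  rw [mul_pow, div_pow, sq_sqrt hpos.le, div_mul_eq_mul_div, lt_div_iff₀ hpos]
  linarith

lemma div_sqrt_one_sub_sq_mul_sqrt_le {d t : ℝ} (ht : 0 ≤ t) (hd : 0 ≤ d)
    (hdt : (d + 1) * t ^ 2 < 1) : t / √(1 - t ^ 2) * √d ≤ t * √(d + 1) := by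
  have hpos : 0 < 1 - t ^ 2 := by nlinarith [sq_nonneg t]
  rw [div_mul_eq_mul_div, div_le_iff₀ (sqrt_pos.2 hpos), mul_assoc, ← sqrt_mul (by positivity)]
  gcongr
  linarith

variable (E) in
lemma stdGaussian_equatorialBand_prod_le (ht : 0 ≤ t) (ht1 : (finrank ℝ E + 1) * t ^ 2 < 1) :
    stdGaussian (WithLp 2 (ℝ × E)) (equatorialBand t (toLp 2 (1, 0))) ≤
      ENNReal.ofReal (√(2 / π) * (t * √(finrank ℝ E + 1))) := by
  set s := t / √(1 - t ^ 2)
  have ht_sq : t ^ 2 < 1 := by nlinarith [sq_nonneg t, (finrank ℝ E).cast_nonneg (α := ℝ)]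
  have hsub : toLp 2 ⁻¹' equatorialBand t (toLp 2 (1, 0)) ⊆ {p : ℝ × E | |p.1| < s * ‖p.2‖} := by
    intro p hp
    refine abs_lt_div_sqrt_one_sub_sq_mul ht ht_sq (norm_nonneg _) ?_
    simpa [mem_equatorialBand, prod_norm_eq_of_L2] using hp
  have hint : Integrable (fun x : E ↦ s * ‖x‖) (stdGaussian E) :=
    (IsGaussian.integrable_id (μ := stdGaussian E)).norm.const_mul s
  have hmean : ∫ x, s * ‖x‖ ∂stdGaussian E ≤ t * √(finrank ℝ E + 1) := by
    rw [integral_const_mul]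
    exact (mul_le_mul_of_nonneg_left (integral_norm_stdGaussian_le E) (by positivity)).trans
      (div_sqrt_one_sub_sq_mul_sqrt_le ht (Nat.cast_nonneg _) ht1)
  calc stdGaussian (WithLp 2 (ℝ × E)) (equatorialBand t (toLp 2 (1, 0)))
      = ((gaussianReal 0 1).prod (stdGaussian E))
          (toLp 2 ⁻¹' equatorialBand t (toLp 2 (1, 0))) := by
        rw [← map_gaussianReal_prod_stdGaussian, Measure.map_apply (by fun_prop)]
        exact measurableSet_lt (by fun_prop) (by fun_prop)
    _ ≤ ((gaussianReal 0 1).prod (stdGaussian E)) {p | |p.1| < s * ‖p.2‖} := measure_mono hsub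
    _ ≤ ENNReal.ofReal (√(2 / π) * ∫ x, s * ‖x‖ ∂stdGaussian E) :=
        gaussianReal_prod_abs_fst_lt_le _ (by fun_prop) (fun x ↦ by positivity) hint
    _ ≤ ENNReal.ofReal (√(2 / π) * (t * √(finrank ℝ E + 1))) := by
        gcongr

lemma IsRotationInvariant.measure_equatorialBand_le {μ : Measure E} [IsProbabilityMeasure μ]
    (hμ : IsRotationInvariant μ) (hμ0 : μ {0} = 0) {u : E} (hu : u ≠ 0) (ht : 0 ≤ t)
    (ht1 : finrank ℝ E * t ^ 2 < 1) :
    μ (equatorialBand t u) ≤ ENNReal.ofReal (√(2 / π) * (t * √(finrank ℝ E))) := by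
  have : Nontrivial E := nontrivial_of_ne u 0 hu
  have := nullSingletonClass_stdGaussian (E := E)
  let F := (ℝ ∙ u)ᗮ
  let W := WithLp 2 (ℝ × F)
  have hW : finrank ℝ W = finrank ℝ F + 1 := by
    rw [(WithLp.linearEquiv 2 ℝ (ℝ × F)).finrank_eq, finrank_prod, finrank_self, add_comm]
  have hF : finrank ℝ F + 1 = finrank ℝ E := by
    rw [← (ℝ ∙ u).finrank_add_finrank_orthogonal, finrank_span_singleton hu, add_comm]
  let f : W ≃ₗᵢ[ℝ] E :=
    (stdOrthonormalBasis ℝ W).equiv (stdOrthonormalBasis ℝ E) (finCongr (hW.trans hF))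
  let e : W := toLp 2 (1, 0)
  have he : f e ≠ 0 :=
    f.map_ne_zero_iff.2 fun h ↦ one_ne_zero (congrArg (fun p : W ↦ p.fst) h)
  calc μ (equatorialBand t u) = μ (equatorialBand t (f e)) := hμ.measure_equatorialBand_eq hu he
    _ = stdGaussian E (equatorialBand t (f e)) :=
        hμ.measure_equatorialBand_congr isRotationInvariant_stdGaussian hμ0 (measure_singleton 0) he
    _ = stdGaussian W (equatorialBand t e) := by
        rw [← stdGaussian_map f, ← f.coe_toMeasurableEquiv, f.toMeasurableEquiv.map_apply,
          f.coe_toMeasurableEquiv, preimage_equatorialBand]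
    _ ≤ ENNReal.ofReal (√(2 / π) * (t * √(finrank ℝ E))) := by
        rw [← hF, Nat.cast_succ] at ht1 ⊢
        exact stdGaussian_equatorialBand_prod_le F ht ht1

end BandBound

section UnitSphere

variable {n : ℕ} {μ : Measure (EuclideanSpace ℝ (Fin n))} {t : ℝ}

namespace IsUniformOnSphere

lemma ae_norm_eq_one (hμ : IsUniformOnSphere μ) : ∀ᵐ x ∂μ, ‖x‖ = 1 := by
  have := hμ.1
  have hsphere := (prob_compl_eq_zero_iff Metric.isClosed_sphere.measurableSet).2 hμ.2.1
  filter_upwards [compl_mem_ae_iff.2 hsphere] with x hx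
  simpa using hx

lemma measure_singleton_zero (hμ : IsUniformOnSphere μ) : μ {0} = 0 := by
  refine measure_eq_zero_iff_ae_notMem.2 ?_
  filter_upwards [hμ.ae_norm_eq_one] with x hx
  exact norm_ne_zero_iff.1 (hx ▸ one_ne_zero)

lemma measure_abs_apply_lt_le (hμ : IsUniformOnSphere μ) (i : Fin n) (ht : 0 ≤ t)
    (ht1 : n * t ^ 2 < 1) :
    μ {x | |x i| < t} ≤ ENNReal.ofReal (√(2 / π) * (t * √n)) := by
  have := hμ.1
  let e : EuclideanSpace ℝ (Fin n) := EuclideanSpace.single i 1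
  have he : e ≠ 0 := by simp [e]
  have hband : {x | |x i| < t} =ᵐ[μ] equatorialBand t e := by
    refine Filter.eventuallyEq_set.2 ?_
    filter_upwards [hμ.ae_norm_eq_one] with x hx
    simp [mem_equatorialBand, e, hx, EuclideanSpace.inner_single_right]
  rw [measure_congr hband]
  simpa using IsRotationInvariant.measure_equatorialBand_le hμ.2.2 hμ.measure_singleton_zero he ht
    (by simpa using ht1)

lemma measure_exists_abs_apply_lt_le (hμ : IsUniformOnSphere μ) (ht : 0 ≤ t)
    (ht1 : n * t ^ 2 < 1) :
    μ {x | ∃ i, |x i| < t} ≤ ENNReal.ofReal (√(2 / π) * (t * (n : ℝ) ^ (3 / 2 : ℝ))) := by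
  have hpow : (n : ℝ) ^ (3 / 2 : ℝ) = √n * n := by
    rw [sqrt_eq_rpow, ← rpow_add_one' n.cast_nonneg (by norm_num)]
    norm_num
  calc μ {x | ∃ i, |x i| < t} = μ (⋃ i, {x | |x i| < t}) := by rw [Set.ofPred_exists]
    _ ≤ ∑ i, μ {x | |x i| < t} := measure_iUnion_fintype_le _ _
    _ ≤ ∑ _ : Fin n, ENNReal.ofReal (√(2 / π) * (t * √n)) :=
        Finset.sum_le_sum fun i _ ↦ hμ.measure_abs_apply_lt_le i ht ht1
    _ = ENNReal.ofReal (√(2 / π) * (t * (n : ℝ) ^ (3 / 2 : ℝ))) := by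
        rw [Finset.sum_const, Finset.card_fin, ← ENNReal.ofReal_nsmul, nsmul_eq_mul, hpow]
        ring_nf

lemma one_sub_le_measure_forall_le_abs_apply (hμ : IsUniformOnSphere μ) (ht : 0 ≤ t)
    (ht1 : n * t ^ 2 < 1) :
    ENNReal.ofReal (1 - √(2 / π) * (t * (n : ℝ) ^ (3 / 2 : ℝ))) ≤ μ {x | ∀ i, t ≤ |x i|} := by
  have := hμ.1
  have hmeas : MeasurableSet {x : EuclideanSpace ℝ (Fin n) | ∃ i, |x i| < t} := by
    measurability
  have hcompl : {x : EuclideanSpace ℝ (Fin n) | ∀ i, t ≤ |x i|} = {x | ∃ i, |x i| < t}ᶜ := by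
    ext x
    simp
  rw [hcompl, prob_compl_eq_one_sub hmeas, ENNReal.ofReal_sub _ (by positivity),
    ENNReal.ofReal_one]
  exact tsub_le_tsub_left (hμ.measure_exists_abs_apply_lt_le ht ht1) 1

end IsUniformOnSphere

lemma exp_neg_two_mul_le {c : ℝ} (hc0 : 0 ≤ c) (hc1 : c ≤ 1) :
    rexp (-(2 * c)) ≤ 1 - √(2 / π) * c := by
  have hchord : rexp (-(2 * c)) ≤ 1 - c + c * rexp (-2) := by
    simpa [mul_comm] using
      convexOn_exp.2 (Set.mem_univ 0) (Set.mem_univ (-2)) (sub_nonneg.2 hc1) hc0 (by ring)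
  have hexp : rexp (-2) ≤ 1 / 5 := by
    rw [exp_neg, ← one_div]
    gcongr
    linarith [quadratic_le_exp_of_nonneg zero_le_two]
  have hsqrt : √(2 / π) ≤ 4 / 5 := by
    rw [sqrt_le_left (by norm_num), div_le_iff₀ pi_pos]
    linarith [pi_gt_d2]
  nlinarith

theorem stmt1_general (hμ : IsUniformOnSphere μ) {c : ℝ} (hc0 : 0 ≤ c) (hc1 : c < 1) :
    ENNReal.ofReal (rexp (-(2 * c))) ≤ μ {x | ∀ i, c * ((n : ℝ) ^ ((3 : ℝ) / 2))⁻¹ ≤ |x i|} := by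
  set x : ℝ := (n : ℝ) ^ ((3 : ℝ) / 2)
  have hx : 0 ≤ x := by positivity
  have htx : c * x⁻¹ * x ≤ c := by
    rw [mul_assoc]
    exact mul_le_of_le_one_right hc0 (inv_mul_le_one_of_le₀ le_rfl hx)
  have hnx : (n : ℝ) ≤ x ^ 2 := by
    have hx_sq : x ^ 2 = (n : ℝ) ^ 3 := by
      rw [← rpow_mul_natCast n.cast_nonneg]
      norm_num
    rw [hx_sq]
    exact_mod_cast Nat.le_self_pow three_ne_zero n
  have ht1 : n * (c * x⁻¹) ^ 2 < 1 :=
    calc n * (c * x⁻¹) ^ 2 ≤ x ^ 2 * (c * x⁻¹) ^ 2 := by gcongr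
      _ = (c * x⁻¹ * x) ^ 2 := by ring
      _ < 1 := pow_lt_one₀ (by positivity) (htx.trans_lt hc1) two_ne_zero
  refine le_trans (ENNReal.ofReal_le_ofReal ?_)
    (hμ.one_sub_le_measure_forall_le_abs_apply (by positivity) ht1)
  calc rexp (-(2 * c)) ≤ 1 - √(2 / π) * c := exp_neg_two_mul_le hc0 hc1.le
    _ ≤ 1 - √(2 / π) * (c * x⁻¹ * x) := by gcongr

end UnitSphere

/-- smallest coordinate of a random unit vector.  Let `n ≥ 2` and let `v` be
uniformly distributed on `S^{n-1}`.  Then for any `0 ≤ c < 1` and `a > 1`, with probability at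
least `exp(-2c) - exp(-((a² - √(2a² - 1))/2) n)` one has `‖v‖_min ≥ (c/a) n^{-3/2}`. -/
theorem stmt1 {n : ℕ} (hn : 2 ≤ n) (μ : Measure (EuclideanSpace ℝ (Fin n)))
    (hμ : IsUniformOnSphere μ) (c a : ℝ) (hc0 : 0 ≤ c) (hc1 : c < 1) (ha : 1 < a) :
    ENNReal.ofReal
        (Real.exp (-(2 * c))
          - Real.exp (-((a ^ 2 - Real.sqrt (2 * a ^ 2 - 1)) / 2) * n)) ≤
      μ {x | ∀ i : Fin n, (c / a) * ((n : ℝ) ^ ((3 : ℝ) / 2))⁻¹ ≤ |x i|} := by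
  refine (ENNReal.ofReal_le_ofReal (sub_le_self _ (exp_nonneg _))).trans <|
    (stmt1_general hμ hc0 hc1).trans <| measure_mono fun x hx i ↦ le_trans ?_ (hx i)
  exact mul_le_mul_of_nonneg_right (div_le_self hc0 ha.le) (by positivity)
end

section
/- For each n >= 1, let v_n be a random vector uniformly distributed on the unit sphere S^{n-1} of R^n. Let F(x) := P(Z^2 <= x) be the cumulative distribution function of the square of a standard normal random variable Z (the chi-squared distribution with one degree of freedom), let Q(s) := inf{ x in R : F(x) >= s } for 0 < s <= 1 with Q(0) := lim_{s -> 0+} Q(s), and let H(s) := -Q(1-s) for 0 <= s < 1. Then for any fixed 0 < delta < 1: (i) max over subsets S of {1,...,n} with |S| = floor(delta n) of ||v_n||_S^2 converges in probability to -integral_0^delta H(u) du as n -> infinity; and (ii) min over subsets S of {1,...,n} with |S| = floor(delta n) of ||v_n||_S^2 converges in probability to -integral_{1-delta}^1 H(u) du as n -> infinity. -/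
open MeasureTheory ProbabilityTheory Filter

/-- `F(x) = P(Z² ≤ x)`, the cumulative distribution function of the square of a standard
normal random variable (the χ²-distribution with one degree of freedom). -/
noncomputable def chiSqCDF (x : ℝ) : ℝ :=
  ((gaussianReal 0 1) {y : ℝ | y ^ 2 ≤ x}).toReal

/-- The quantile function `Q(s) = inf {x : F(x) ≥ s}` of the χ²₁ distribution. -/
noncomputable def chiSqQuantile (s : ℝ) : ℝ :=
  sInf {x : ℝ | s ≤ chiSqCDF x}

/-- `H(s) = -Q(1-s)` for `0 ≤ s < 1`. -/
noncomputable def Hfun (s : ℝ) : ℝ :=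
  -chiSqQuantile (1 - s)

/-! A rotation-invariant probability measure on the unit sphere is unique: its characteristic
function depends only on the norm, and averaging it over directions distributed according to a
second such measure is symmetric in the two measures. Hence `v_n` may be taken to be `g / ‖g‖` for a
standard Gaussian vector `g`, and since `‖g‖² / n → 1` almost surely, it suffices to study `1 / n`
times the extreme sums of `k ∼ δ n` terms among `n` independent `χ²₁` variables `a i`.

For every `t` the largest sum of `k` terms is at most `k t + ∑ i, max (a i - t) 0`, with equality
when `t` is the `k`-th largest term, so it also dominates the sum of the `a i` with any weights in
`[0, 1]` of total at most `k`. Taking for `t` the quantile of level `1 - δ`, and as weights a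
selection of the terms above `t`, the law of large numbers makes both bounds converge to the
integral of the quantile function over `[1 - δ, 1]`. The smallest sum is the total minus the largest
sum of the complementary number of terms. -/

open scoped Topology Pointwise RealInnerProductSpace

section Quantile

/-- The quantile function of a measure on `ℝ`: the generalized inverse of its cumulative
distribution function, meant for levels `0 < s < 1` (outside this range the infimum may be a junk
value). -/
noncomputable def quantile (ρ : Measure ℝ) (s : ℝ) : ℝ :=
  sInf {x : ℝ | s ≤ cdf ρ x}

variable {ρ : Measure ℝ} {s : ℝ}

lemma quantile_le_iff (hs0 : 0 < s) (hs1 : s < 1) {x : ℝ} :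
    quantile ρ s ≤ x ↔ s ≤ cdf ρ x := by
  have hbdd : BddBelow {x : ℝ | s ≤ cdf ρ x} := by
    obtain ⟨b, hb⟩ := ((tendsto_cdf_atBot ρ).eventually_lt_const hs0).exists
    exact ⟨b, fun y hy => le_of_lt ((monotone_cdf ρ).reflect_lt (hb.trans_le hy))⟩
  have hne : {x : ℝ | s ≤ cdf ρ x}.Nonempty :=
    ((tendsto_cdf_atTop ρ).eventually_const_le hs1).exists
  have hmem : s ≤ cdf ρ (quantile ρ s) := by
    have hright := ((cdf ρ).right_continuous (quantile ρ s)).mono_left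
      (nhdsWithin_mono _ Set.Ioi_subset_Ici_self)
    refine ge_of_tendsto hright (eventually_mem_nhdsWithin.mono fun y hy => ?_)
    obtain ⟨z, hz, hzy⟩ := exists_lt_of_csInf_lt hne hy
    exact le_trans hz (monotone_cdf ρ hzy.le)
  exact ⟨fun h => hmem.trans (monotone_cdf ρ h), fun h => csInf_le hbdd h⟩

lemma monotoneOn_quantile : MonotoneOn (quantile ρ) (Set.Ioo 0 1) := fun _ hr _ hs hrs =>
  (quantile_le_iff hr.1 hr.2).2 (hrs.trans ((quantile_le_iff hs.1 hs.2).1 le_rfl))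

lemma aemeasurable_quantile : AEMeasurable (quantile ρ) (volume.restrict (Set.Ioo 0 1)) :=
  aemeasurable_restrict_of_monotoneOn measurableSet_Ioo monotoneOn_quantile

variable [IsProbabilityMeasure ρ]

lemma measureReal_Ioi_quantile_le (hs0 : 0 < s) (hs1 : s < 1) :
    ρ.real (Set.Ioi (quantile ρ s)) ≤ 1 - s := by
  rw [← Set.compl_Iic, probReal_compl_eq_one_sub measurableSet_Iic, ← cdf_eq_real]
  exact sub_le_sub_left ((quantile_le_iff hs0 hs1).1 le_rfl) 1

lemma le_measureReal_Ici_quantile (hs0 : 0 < s) (hs1 : s < 1) :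
    1 - s ≤ ρ.real (Set.Ici (quantile ρ s)) := by
  have hleft : Function.leftLim (cdf ρ) (quantile ρ s) ≤ s := by
    refine le_of_tendsto ((monotone_cdf ρ).tendsto_leftLim _)
      (eventually_mem_nhdsWithin.mono fun x hx => le_of_lt (not_le.1 fun h => ?_))
    exact (not_le.2 hx) ((quantile_le_iff hs0 hs1).2 h)
  have hIci := (cdf ρ).measure_Ici (tendsto_cdf_atTop ρ) (quantile ρ s)
  rw [measure_cdf] at hIci
  rw [Measure.real, hIci, ENNReal.toReal_ofReal']
  exact (sub_le_sub_left hleft 1).trans (le_max_left _ _)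

lemma hasLaw_quantile : HasLaw (quantile ρ) ρ (volume.restrict (Set.Ioo 0 1)) where
  aemeasurable := aemeasurable_quantile
  map_eq := by
    have : IsProbabilityMeasure (volume.restrict (Set.Ioo (0 : ℝ) 1)) := ⟨by simp⟩
    have := Measure.isProbabilityMeasure_map (aemeasurable_quantile (ρ := ρ))
    refine Measure.ext_of_Iic _ _ fun x => ?_
    rw [Measure.map_apply_of_aemeasurable aemeasurable_quantile measurableSet_Iic,
      Measure.restrict_apply' measurableSet_Ioo, ← ofReal_cdf]
    calc volume (quantile ρ ⁻¹' Set.Iic x ∩ Set.Ioo 0 1)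
      _ = volume (Set.Ioo 0 1 ∩ Set.Iic (cdf ρ x)) := by
        congr 1 with u
        rw [Set.inter_comm]
        exact and_congr_right fun hu => quantile_le_iff hu.1 hu.2
      _ = volume (Set.Ioc 0 1 ∩ Set.Iic (cdf ρ x)) :=
        measure_congr (Ioo_ae_eq_Ioc.inter (ae_eq_refl _))
      _ = ENNReal.ofReal (cdf ρ x) := by
        rw [Set.Ioc_inter_Iic, min_eq_right (cdf_le_one ρ x), Real.volume_Ioc, sub_zero]

lemma intervalIntegrable_quantile (hρ : Integrable id ρ) :
    IntervalIntegrable (quantile ρ) volume 0 1 := by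
  rw [← (hasLaw_quantile (ρ := ρ)).map_eq, integrable_map_measure (by fun_prop)
    aemeasurable_quantile] at hρ
  exact (intervalIntegrable_iff_integrableOn_Ioo_of_le zero_le_one).2 hρ

lemma integral_quantile : ∫ s in (0 : ℝ)..1, quantile ρ s = ∫ x, x ∂ρ := by
  rw [intervalIntegral.integral_of_le zero_le_one, integral_Ioc_eq_integral_Ioo,
    hasLaw_quantile.integral_eq]

lemma integral_quantile_upper_tail (hρ : Integrable id ρ) (hs0 : 0 < s) (hs1 : s < 1) :
    ∫ u in s..1, quantile ρ u =
      (1 - s) * quantile ρ s + ∫ x, max (x - quantile ρ s) 0 ∂ρ := by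
  set t := quantile ρ s
  have hii : IntervalIntegrable (quantile ρ) volume s 1 :=
    (intervalIntegrable_quantile hρ).mono_set (Set.uIcc_subset_uIcc
      (Set.mem_uIcc_of_le hs0.le hs1.le) Set.right_mem_uIcc)
  have htail : ∫ x, max (x - t) 0 ∂ρ = ∫ u in s..1, (quantile ρ u - t) := by
    rw [← hasLaw_quantile.integral_comp (f := fun x => max (x - t) 0) (by fun_prop),
      intervalIntegral.integral_of_le hs1.le, integral_Ioc_eq_integral_Ioo,
      ← Set.inter_eq_right.2 (Set.Ioo_subset_Ioo_left hs0.le),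
      ← setIntegral_indicator measurableSet_Ioo]
    refine setIntegral_congr_fun measurableSet_Ioo fun u hu => ?_
    rcases le_or_gt u s with hus | hsu
    · have hle : quantile ρ u ≤ t := monotoneOn_quantile hu ⟨hs0, hs1⟩ hus
      simp [hus.not_gt, hle]
    · have hle : t ≤ quantile ρ u := monotoneOn_quantile ⟨hs0, hs1⟩ hu hsu.le
      simp [hsu, hu.2, hle]
  rw [htail, intervalIntegral.integral_sub hii intervalIntegrable_const]
  simp

/-- The weights select the part of `ρ` above its `s`-quantile; randomization at the quantile itself
gives the selection total mass exactly `1 - s` even if `ρ` has an atom there. -/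
lemma exists_quantile_weight (hs0 : 0 < s) (hs1 : s < 1) :
    ∃ b : ℝ → ℝ, Measurable b ∧ (∀ x, b x ∈ Set.Icc 0 1) ∧ ∫ x, b x ∂ρ = 1 - s ∧
      ∀ x, b x * (x - quantile ρ s) = max (x - quantile ρ s) 0 := by
  set t := quantile ρ s
  have hmem : 1 - s ∈ segment ℝ (ρ.real (Set.Ioi t)) (ρ.real (Set.Ici t)) := by
    rw [segment_eq_Icc (measureReal_mono Set.Ioi_subset_Ici_self)]
    exact ⟨measureReal_Ioi_quantile_le hs0 hs1, le_measureReal_Ici_quantile hs0 hs1⟩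
  obtain ⟨p, q, hp, hq, hpq, hmass⟩ := hmem
  refine ⟨fun x => p * (Set.Ioi t).indicator 1 x + q * (Set.Ici t).indicator 1 x,
    by fun_prop (disch := measurability), fun x => ?_, ?_, fun x => ?_⟩
  · by_cases h1 : t < x <;> by_cases h2 : t ≤ x <;> simp [h1, h2] <;> constructor <;> linarith
  · rw [integral_add, integral_const_mul, integral_const_mul,
      integral_indicator_one measurableSet_Ioi, integral_indicator_one measurableSet_Ici]
    · exact hmass
    all_goals exact ((integrable_const 1).indicator (by measurability)).const_mul _
  · rcases lt_trichotomy x t with h | rfl | h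
    · simp [h.not_gt, h.not_ge, h.le]
    · simp
    · simp [h, h.le, hpq]

end Quantile

section SubsetSums

variable {ι : Type*}

/-- The sums of `a` over all `k`-element subsets of its index type; their supremum and infimum are
the extreme sums of `k` entries of `a`. -/
def subsetSums (k : ℕ) (a : ι → ℝ) : Set ℝ :=
  {r : ℝ | ∃ S : Finset ι, S.card = k ∧ r = ∑ i ∈ S, a i}

lemma subsetSums_eq_range (k : ℕ) (a : ι → ℝ) :
    subsetSums k a = Set.range fun S : {S : Finset ι // S.card = k} => ∑ i ∈ S.1, a i := by
  ext r
  simp only [subsetSums, Set.mem_ofPred_eq, Set.mem_range, Subtype.exists, exists_prop, eq_comm]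

lemma subsetSums_smul (k : ℕ) (c : ℝ) (a : ι → ℝ) :
    subsetSums k (c • a) = c • subsetSums k a := by
  simp only [subsetSums_eq_range, ← Set.range_smul, Pi.smul_apply, smul_eq_mul, Finset.mul_sum]

lemma sSup_subsetSums_smul (k : ℕ) {c : ℝ} (hc : 0 ≤ c) (a : ι → ℝ) :
    sSup (subsetSums k (c • a)) = c * sSup (subsetSums k a) := by
  rw [subsetSums_smul, Real.sSup_smul_of_nonneg hc, smul_eq_mul]

lemma sInf_subsetSums_smul (k : ℕ) {c : ℝ} (hc : 0 ≤ c) (a : ι → ℝ) :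
    sInf (subsetSums k (c • a)) = c * sInf (subsetSums k a) := by
  rw [subsetSums_smul, Real.sInf_smul_of_nonneg hc, smul_eq_mul]

lemma finite_subsetSums [Finite ι] (k : ℕ) (a : ι → ℝ) : (subsetSums k a).Finite :=
  subsetSums_eq_range k a ▸ Set.finite_range _

lemma measurable_sSup_subsetSums [Countable ι] (k : ℕ) :
    Measurable fun a : ι → ℝ => sSup (subsetSums k a) := by
  simp only [subsetSums_eq_range]
  exact Measurable.iSup fun S => by fun_prop

lemma measurable_sInf_subsetSums [Countable ι] (k : ℕ) :
    Measurable fun a : ι → ℝ => sInf (subsetSums k a) := by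
  simp only [subsetSums_eq_range]
  exact Measurable.iInf fun S => by fun_prop

variable [Fintype ι] {k : ℕ} {a : ι → ℝ}

lemma nonempty_subsetSums (hk : k ≤ Fintype.card ι) (a : ι → ℝ) : (subsetSums k a).Nonempty := by
  obtain ⟨S, -, hS⟩ := Finset.exists_subset_card_eq (s := (Finset.univ : Finset ι)) hk
  exact ⟨_, S, hS, rfl⟩

lemma sInf_subsetSums (hk : k ≤ Fintype.card ι) (a : ι → ℝ) :
    sInf (subsetSums k a) = ∑ i, a i - sSup (subsetSums (Fintype.card ι - k) a) := by
  classical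
  have hcompl : subsetSums k a = (∑ i, a i - ·) '' subsetSums (Fintype.card ι - k) a := by
    ext r
    constructor
    · rintro ⟨S, rfl, rfl⟩
      exact ⟨_, ⟨Sᶜ, Finset.card_compl S, rfl⟩, by simp [← Finset.sum_add_sum_compl S a]⟩
    · rintro ⟨_, ⟨S, hS, rfl⟩, rfl⟩
      refine ⟨Sᶜ, by rw [Finset.card_compl]; omega, ?_⟩
      simp [← Finset.sum_add_sum_compl S a]
  have hne := nonempty_subsetSums (Nat.sub_le (Fintype.card ι) k) a
  rw [hcompl]
  exact (Antitone.map_csSup_of_continuousAt (by fun_prop) (fun x y h => sub_le_sub_left h _) hne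
    (finite_subsetSums _ a).bddAbove).symm

lemma sSup_subsetSums_le (hk : k ≤ Fintype.card ι) (a : ι → ℝ) (t : ℝ) :
    sSup (subsetSums k a) ≤ k * t + ∑ i, max (a i - t) 0 := by
  refine csSup_le (nonempty_subsetSums hk a) ?_
  rintro r ⟨S, hS, rfl⟩
  calc ∑ i ∈ S, a i
    _ ≤ ∑ i ∈ S, (t + max (a i - t) 0) :=
      Finset.sum_le_sum fun i _ => by linarith [le_max_left (a i - t) 0]
    _ = k * t + ∑ i ∈ S, max (a i - t) 0 := by
      rw [Finset.sum_add_distrib, Finset.sum_const, hS, nsmul_eq_mul]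
    _ ≤ k * t + ∑ i, max (a i - t) 0 := by
      gcongr
      exact S.subset_univ

lemma exists_card_eq_forall_notMem_le (hk : k ≤ Fintype.card ι) (a : ι → ℝ) :
    ∃ S : Finset ι, S.card = k ∧ ∀ i ∈ S, ∀ j ∉ S, a j ≤ a i := by
  classical
  induction k with
  | zero => exact ⟨∅, by simp⟩
  | succ k ih =>
    obtain ⟨S, hcard, hS⟩ := ih (Nat.le_of_succ_le hk)
    have hne : Sᶜ.Nonempty := by
      rw [← Finset.card_pos, Finset.card_compl]
      omega
    obtain ⟨m, hm, hmax⟩ := Finset.exists_max_image Sᶜ a hne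
    rw [Finset.mem_compl] at hm
    refine ⟨insert m S, by rw [Finset.card_insert_of_notMem hm, hcard], fun i hi j hj => ?_⟩
    rw [Finset.mem_insert, not_or] at hj
    rcases Finset.mem_insert.1 hi with rfl | hi
    · exact hmax j (Finset.mem_compl.2 hj.2)
    · exact hS i hi j hj.2

lemma exists_threshold_le_sSup_subsetSums (hk : k ≤ Fintype.card ι) (ha : ∀ i, 0 ≤ a i) :
    ∃ τ, 0 ≤ τ ∧ k * τ + ∑ i, max (a i - τ) 0 ≤ sSup (subsetSums k a) := by
  classical
  obtain ⟨S, hcard, hS⟩ := exists_card_eq_forall_notMem_le hk a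
  -- `τ` is the `k`-th largest entry, or any upper bound of the entries if `k = 0`.
  obtain ⟨τ, hτ, hτS, hτc⟩ : ∃ τ, 0 ≤ τ ∧ (∀ i ∈ S, τ ≤ a i) ∧ ∀ j ∉ S, a j ≤ τ := by
    rcases S.eq_empty_or_nonempty with rfl | hne
    · exact ⟨∑ i, a i, Finset.sum_nonneg fun i _ => ha i, by simp,
        fun j _ => Finset.single_le_sum (fun i _ => ha i) (Finset.mem_univ j)⟩
    · obtain ⟨m, hm, hmin⟩ := Finset.exists_min_image S a hne
      exact ⟨a m, ha m, hmin, hS m hm⟩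
  refine ⟨τ, hτ, le_csSup (finite_subsetSums k a).bddAbove ⟨S, hcard, ?_⟩⟩
  have hin : ∑ i ∈ S, max (a i - τ) 0 = ∑ i ∈ S, (a i - τ) :=
    Finset.sum_congr rfl fun i hi => max_eq_left (sub_nonneg.2 (hτS i hi))
  have hout : ∑ i ∈ Sᶜ, max (a i - τ) 0 = 0 :=
    Finset.sum_eq_zero fun i hi => max_eq_right (sub_nonpos.2 (hτc i (Finset.mem_compl.1 hi)))
  rw [← Finset.sum_add_sum_compl S, hin, hout, Finset.sum_sub_distrib, Finset.sum_const, hcard,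
    nsmul_eq_mul]
  ring

lemma sum_mul_le_sSup_subsetSums (hk : k ≤ Fintype.card ι) (ha : ∀ i, 0 ≤ a i) {w : ι → ℝ}
    (hw : ∀ i, w i ∈ Set.Icc 0 1) (hsum : ∑ i, w i ≤ k) :
    ∑ i, w i * a i ≤ sSup (subsetSums k a) := by
  obtain ⟨τ, hτ, hle⟩ := exists_threshold_le_sSup_subsetSums hk ha
  calc ∑ i, w i * a i
    _ ≤ ∑ i, (w i * τ + max (a i - τ) 0) := Finset.sum_le_sum fun i _ => by
      have : w i * (a i - τ) ≤ max (a i - τ) 0 := by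
        obtain ⟨h0, h1⟩ := hw i
        rcases le_total 0 (a i - τ) with h | h
        · exact (mul_le_of_le_one_left h h1).trans (le_max_left _ _)
        · exact (mul_nonpos_of_nonneg_of_nonpos h0 h).trans (le_max_right _ _)
      linarith
    _ = (∑ i, w i) * τ + ∑ i, max (a i - τ) 0 := by
      rw [Finset.sum_add_distrib, Finset.sum_mul]
    _ ≤ k * τ + ∑ i, max (a i - τ) 0 := by gcongr
    _ ≤ sSup (subsetSums k a) := hle

lemma mul_sum_mul_le_sSup_subsetSums (hk : k ≤ Fintype.card ι) (ha : ∀ i, 0 ≤ a i) {w : ι → ℝ}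
    (hw : ∀ i, w i ∈ Set.Icc 0 1) :
    min 1 (k / ∑ i, w i) * ∑ i, w i * a i ≤ sSup (subsetSums k a) := by
  have hw0 : 0 ≤ ∑ i, w i := Finset.sum_nonneg fun i _ => (hw i).1
  have hc0 : 0 ≤ min 1 (k / ∑ i, w i) := by positivity
  rw [Finset.mul_sum]
  simp only [← mul_assoc]
  refine sum_mul_le_sSup_subsetSums hk ha
    (fun i => ⟨mul_nonneg hc0 (hw i).1, mul_le_one₀ (min_le_left _ _) (hw i).1 (hw i).2⟩) ?_
  rw [← Finset.mul_sum]
  calc min 1 (k / ∑ i, w i) * ∑ i, w i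
    _ ≤ k / (∑ i, w i) * ∑ i, w i := by gcongr; exact min_le_right _ _
    _ ≤ k := by
      rw [div_mul_eq_mul_div, mul_div_assoc]
      exact mul_le_of_le_one_right k.cast_nonneg (div_self_le_one _)

lemma tendsto_sSup_subsetSums_div {a b : ℕ → ℝ} {k : ℕ → ℕ} {δ t M : ℝ} (hδ : δ ≠ 0)
    (hk : ∀ n, k n ≤ n) (hkδ : Tendsto (fun n => (k n / n : ℝ)) atTop (𝓝 δ))
    (ha : ∀ i, 0 ≤ a i) (hb : ∀ i, b i ∈ Set.Icc 0 1)
    (hba : ∀ i, b i * (a i - t) = max (a i - t) 0)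
    (hbδ : Tendsto (fun n : ℕ => (∑ i ∈ Finset.range n, b i) / n) atTop (𝓝 δ))
    (hM : Tendsto (fun n : ℕ => (∑ i ∈ Finset.range n, max (a i - t) 0) / n) atTop (𝓝 M)) :
    Tendsto (fun n => sSup (subsetSums (k n) fun i : Fin n => a i) / n) atTop
      (𝓝 (δ * t + M)) := by
  have hcard (n : ℕ) : k n ≤ Fintype.card (Fin n) := (hk n).trans_eq (Fintype.card_fin n).symm
  have hweight : Tendsto (fun n => min 1 (k n / ∑ i ∈ Finset.range n, b i)) atTop (𝓝 1) := by
    have hratio := hkδ.div hbδ hδ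
    rw [div_self hδ] at hratio
    have hmin := (tendsto_const_nhds (x := (1 : ℝ))).min hratio
    rw [min_self] at hmin
    refine hmin.congr' ((eventually_ne_atTop 0).mono fun n hn => ?_)
    simp only [Pi.div_apply, div_div_div_cancel_right₀ (Nat.cast_ne_zero (R := ℝ).2 hn)]
  have hsum : Tendsto (fun n : ℕ => (∑ i ∈ Finset.range n, b i * a i) / n) atTop
      (𝓝 (δ * t + M)) := by
    refine ((hbδ.mul_const t).add hM).congr fun n => ?_
    simp only [← hba, mul_sub, Finset.sum_sub_distrib, ← Finset.sum_mul]
    ring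
  refine tendsto_of_tendsto_of_tendsto_of_le_of_le (by simpa only [one_mul] using hweight.mul hsum)
    ((hkδ.mul_const t).add hM) (fun n => ?_) fun n => ?_
  · have h := mul_sum_mul_le_sSup_subsetSums (hcard n) (fun i => ha i) fun i => hb i
    rw [← Finset.sum_range, ← Finset.sum_range fun i => b i * a i] at h
    simp only [← mul_div_assoc]
    gcongr
  · have h := sSup_subsetSums_le (hcard n) (fun i => a i) t
    rw [← Finset.sum_range fun i => max (a i - t) 0] at h
    calc sSup (subsetSums (k n) fun i : Fin n => a i) / n
      _ ≤ (k n * t + ∑ i ∈ Finset.range n, max (a i - t) 0) / n := by gcongr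
      _ = k n / n * t + (∑ i ∈ Finset.range n, max (a i - t) 0) / n := by ring

end SubsetSums

section LawOfLargeNumbers

variable {Ω 𝓧 : Type*} [MeasurableSpace Ω] [MeasurableSpace 𝓧] {P : Measure Ω}

lemma ae_tendsto_sum_div {Y : ℕ → Ω → 𝓧} {ρ : Measure 𝓧} {φ : 𝓧 → ℝ}
    (hlaw : ∀ i, HasLaw (Y i) ρ P) (hindep : Pairwise fun i j => Y i ⟂ᵢ[P] Y j)
    (hφ : Measurable φ) (hint : Integrable φ ρ) :
    ∀ᵐ ω ∂P, Tendsto (fun n : ℕ => (∑ i ∈ Finset.range n, φ (Y i ω)) / n) atTop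
      (𝓝 (∫ x, φ x ∂ρ)) := by
  have hint0 : Integrable (φ ∘ Y 0) P := by
    rw [← (hlaw 0).map_eq] at hint
    exact hint.comp_aemeasurable (hlaw 0).aemeasurable
  rw [← (hlaw 0).integral_comp hint.aestronglyMeasurable]
  exact strong_law_ae_real (fun i => φ ∘ Y i) hint0
    (fun i j hij => (hindep hij).comp hφ hφ)
    fun i => ((hlaw i).identDistrib (hlaw 0)).comp hφ

variable {Y : ℕ → Ω → ℝ} {ρ : Measure ℝ} [IsProbabilityMeasure ρ] {k : ℕ → ℕ} {δ : ℝ}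

lemma ae_tendsto_sSup_subsetSums_div (hρ0 : ∀ᵐ x ∂ρ, 0 ≤ x) (hρ : Integrable id ρ)
    (hlaw : ∀ i, HasLaw (Y i) ρ P) (hindep : Pairwise fun i j => Y i ⟂ᵢ[P] Y j)
    (hδ0 : 0 < δ) (hδ1 : δ < 1) (hk : ∀ n, k n ≤ n)
    (hkδ : Tendsto (fun n => (k n / n : ℝ)) atTop (𝓝 δ)) :
    ∀ᵐ ω ∂P, Tendsto (fun n => sSup (subsetSums (k n) fun i : Fin n => Y i ω) / n) atTop
      (𝓝 (∫ s in (1 - δ)..1, quantile ρ s)) := by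
  have hs0 : 0 < 1 - δ := sub_pos.2 hδ1
  have hs1 : 1 - δ < 1 := sub_lt_self 1 hδ0
  obtain ⟨b, hbm, hb, hmass, hbt⟩ := exists_quantile_weight (ρ := ρ) hs0 hs1
  rw [integral_quantile_upper_tail hρ hs0 hs1, sub_sub_cancel]
  rw [sub_sub_cancel] at hmass
  set t := quantile ρ (1 - δ)
  have hbint : Integrable b ρ := .of_mem_Icc 0 1 hbm.aemeasurable (ae_of_all _ hb)
  have hmax : Integrable (fun x => max (x - t) 0) ρ := (hρ.sub (integrable_const t)).pos_part
  have hY0 : ∀ᵐ ω ∂P, ∀ i, 0 ≤ Y i ω := ae_all_iff.2 fun i =>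
    ((hlaw i).ae_iff (p := (0 ≤ ·)) (by fun_prop)).2 hρ0
  filter_upwards [hY0, ae_tendsto_sum_div hlaw hindep hbm hbint,
    ae_tendsto_sum_div hlaw hindep (by fun_prop) hmax] with ω h0 hbω hmaxω
  rw [hmass] at hbω
  exact tendsto_sSup_subsetSums_div (a := fun i => Y i ω) hδ0.ne' hk hkδ h0 (fun i => hb (Y i ω))
    (fun i => hbt (Y i ω)) hbω hmaxω

lemma ae_tendsto_sInf_subsetSums_div (hρ0 : ∀ᵐ x ∂ρ, 0 ≤ x) (hρ : Integrable id ρ)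
    (hlaw : ∀ i, HasLaw (Y i) ρ P) (hindep : Pairwise fun i j => Y i ⟂ᵢ[P] Y j)
    (hδ0 : 0 < δ) (hδ1 : δ < 1) (hk : ∀ n, k n ≤ n)
    (hkδ : Tendsto (fun n => (k n / n : ℝ)) atTop (𝓝 δ)) :
    ∀ᵐ ω ∂P, Tendsto (fun n => sInf (subsetSums (k n) fun i : Fin n => Y i ω) / n) atTop
      (𝓝 (∫ s in (0 : ℝ)..δ, quantile ρ s)) := by
  have hcompl : Tendsto (fun n => ((n - k n : ℕ) / n : ℝ)) atTop (𝓝 (1 - δ)) := by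
    refine (hkδ.const_sub 1).congr' ((eventually_ne_atTop 0).mono fun n hn => ?_)
    simp only [Nat.cast_sub (hk n), sub_div, div_self (Nat.cast_ne_zero (R := ℝ).2 hn)]
  have hsplit : ∫ s in (0 : ℝ)..δ, quantile ρ s =
      ∫ x, x ∂ρ - ∫ s in (1 - (1 - δ))..1, quantile ρ s := by
    have hii := intervalIntegrable_quantile hρ
    rw [sub_sub_cancel, ← integral_quantile, eq_sub_iff_add_eq]
    exact intervalIntegral.integral_add_adjacent_intervals
      (hii.mono_set (by grind [Set.uIcc_of_le])) (hii.mono_set (by grind [Set.uIcc_of_le]))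
  filter_upwards [ae_tendsto_sum_div hlaw hindep measurable_id hρ,
    ae_tendsto_sSup_subsetSums_div hρ0 hρ hlaw hindep (sub_pos.2 hδ1) (sub_lt_self 1 hδ0)
      (fun n => Nat.sub_le n (k n)) hcompl] with ω hsum hsup
  rw [hsplit]
  refine (hsum.sub hsup).congr fun n => ?_
  rw [sInf_subsetSums ((hk n).trans_eq (Fintype.card_fin n).symm), Fintype.card_fin,
    Finset.sum_range, sub_div]
  rfl

end LawOfLargeNumbers

section IsometryInvariant

variable {E : Type*} [NormedAddCommGroup E] [InnerProductSpace ℝ E] [MeasurableSpace E]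
  [BorelSpace E] {μ ν : Measure E}

lemma charFun_eq_of_norm_eq (hμ : ∀ O : E ≃ₗᵢ[ℝ] E, μ.map O = μ) {s t : E} (hst : ‖s‖ = ‖t‖) :
    charFun μ s = charFun μ t := by
  set O : E ≃ₗᵢ[ℝ] E := (ℝ ∙ (s - t))ᗮ.reflection
  have hO : O s = t := Submodule.reflection_sub hst
  calc charFun μ s
    _ = charFun (μ.map O) (O s) := by
      rw [charFun_apply, charFun_apply, integral_map (by fun_prop) (by fun_prop)]
      simp only [O.inner_map_map]
    _ = charFun μ t := by rw [hμ O, hO]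

lemma integral_charFun_norm_smul [IsProbabilityMeasure ν]
    (hμ : ∀ O : E ≃ₗᵢ[ℝ] E, μ.map O = μ) (hν : ∀ᵐ y ∂ν, ‖y‖ = 1) (t : E) :
    ∫ y, charFun μ (‖t‖ • y) ∂ν = charFun μ t := by
  have hconst : ∀ᵐ y ∂ν, charFun μ (‖t‖ • y) = charFun μ t := hν.mono fun y hy =>
    charFun_eq_of_norm_eq hμ (by rw [norm_smul, norm_norm, hy, mul_one])
  rw [integral_congr_ae hconst, integral_const, probReal_univ, one_smul]

lemma integral_charFun_smul_comm [SecondCountableTopology E] [IsFiniteMeasure μ]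
    [IsFiniteMeasure ν] (r : ℝ) :
    ∫ y, charFun μ (r • y) ∂ν = ∫ x, charFun ν (r • x) ∂μ := by
  have hint : Integrable (Function.uncurry fun y x : E =>
      Complex.exp ((⟪x, r • y⟫ : ℝ) * Complex.I)) (ν.prod μ) := by
    refine .of_bound (by unfold Function.uncurry; fun_prop) 1 (ae_of_all _ fun p => ?_)
    simp only [Function.uncurry, Complex.norm_exp_ofReal_mul_I, le_refl]
  simp only [charFun_apply]
  rw [integral_integral_swap hint]
  simp only [real_inner_smul_right, real_inner_comm]

lemma eq_of_map_linearIsometryEquiv_eq [SecondCountableTopology E] [CompleteSpace E]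
    [IsProbabilityMeasure μ] [IsProbabilityMeasure ν]
    (hμ : ∀ O : E ≃ₗᵢ[ℝ] E, μ.map O = μ) (hμ1 : ∀ᵐ x ∂μ, ‖x‖ = 1)
    (hν : ∀ O : E ≃ₗᵢ[ℝ] E, ν.map O = ν) (hν1 : ∀ᵐ y ∂ν, ‖y‖ = 1) : μ = ν := by
  refine Measure.ext_of_charFun (funext fun t => ?_)
  rw [← integral_charFun_norm_smul hμ hν1 t, integral_charFun_smul_comm,
    integral_charFun_norm_smul hν hμ1 t]

lemma measurable_normalize : Measurable (NormedSpace.normalize : E → E) := by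
  unfold NormedSpace.normalize
  fun_prop

lemma map_linearIsometryEquiv_map_normalize (hμ : ∀ O : E ≃ₗᵢ[ℝ] E, μ.map O = μ)
    (O : E ≃ₗᵢ[ℝ] E) :
    (μ.map NormedSpace.normalize).map O = μ.map NormedSpace.normalize := by
  have hcomm : O ∘ NormedSpace.normalize = NormedSpace.normalize ∘ O := by
    ext x
    simp [NormedSpace.normalize]
  rw [Measure.map_map (by fun_prop) measurable_normalize, hcomm,
    ← Measure.map_map measurable_normalize (by fun_prop), hμ O]

end IsometryInvariant

section UniformOnSphere

variable {n : ℕ} {μ : Measure (EuclideanSpace ℝ (Fin n))}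

lemma IsUniformOnSphere.ae_norm_eq_one_s6 (hμ : IsUniformOnSphere μ) : ∀ᵐ x ∂μ, ‖x‖ = 1 := by
  have := hμ.1
  have hsphere := (mem_ae_iff_prob_eq_one Metric.isClosed_sphere.measurableSet).2 hμ.2.1
  filter_upwards [hsphere] with x hx using mem_sphere_zero_iff_norm.1 hx

variable {Ω : Type*} [MeasurableSpace Ω] {P : Measure Ω}

lemma hasLaw_toLp_stdGaussian {ι : Type*} [Fintype ι] {X : ι → Ω → ℝ}
    (hlaw : ∀ i, HasLaw (X i) (gaussianReal 0 1) P) (hindep : iIndepFun X P) :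
    HasLaw (fun ω => WithLp.toLp 2 fun i => X i ω) (stdGaussian (EuclideanSpace ℝ ι)) P :=
  HasLaw.fun_comp ⟨by fun_prop, map_pi_eq_stdGaussian⟩ (hindep.hasLaw_pi hlaw)

lemma ae_ne_zero_stdGaussian {ι : Type*} [Fintype ι] [Nonempty ι] :
    ∀ᵐ x ∂stdGaussian (EuclideanSpace ℝ ι), x ≠ 0 := by
  have := nullSingletonClass_gaussianReal (μ := 0) (v := 1) one_ne_zero
  rw [← map_pi_eq_stdGaussian, ae_map_iff (p := (· ≠ 0)) (by fun_prop)
    (measurableSet_singleton 0).compl]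
  refine (Measure.ae_ne _ 0).mono fun x hx => ?_
  simpa using hx

lemma IsUniformOnSphere.map_normalize_stdGaussian (hμ : IsUniformOnSphere μ) :
    (stdGaussian (EuclideanSpace ℝ (Fin n))).map NormedSpace.normalize = μ := by
  have := hμ.1
  obtain ⟨x, hx⟩ := hμ.ae_norm_eq_one_s6.exists
  have : Nonempty (Fin n) := by
    by_contra hempty
    rw [not_nonempty_iff] at hempty
    simp [Subsingleton.elim x 0] at hx
  have := Measure.isProbabilityMeasure_map (μ := stdGaussian (EuclideanSpace ℝ (Fin n)))
    measurable_normalize.aemeasurable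
  refine eq_of_map_linearIsometryEquiv_eq
    (map_linearIsometryEquiv_map_normalize stdGaussian_map) ?_ hμ.2.2 hμ.ae_norm_eq_one_s6
  rw [ae_map_iff measurable_normalize.aemeasurable
    (measurableSet_eq_fun (by fun_prop) (by fun_prop))]
  exact ae_ne_zero_stdGaussian.mono fun x => NormedSpace.norm_normalize_eq_one_iff.2

lemma normalize_sq_coord (x : EuclideanSpace ℝ (Fin n)) :
    (fun i => NormedSpace.normalize x i ^ 2) = (‖x‖ ^ 2)⁻¹ • fun i => x i ^ 2 := by
  ext i
  simp [NormedSpace.normalize, mul_pow]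

end UniformOnSphere

section Transference

lemma integral_sq_gaussianReal : ∫ y, y ^ 2 ∂gaussianReal 0 1 = 1 := by
  have hvar := variance_id_gaussianReal (μ := 0) (v := 1)
  rw [variance_eq_integral aemeasurable_id] at hvar
  simpa using hvar

lemma integrable_sq_gaussianReal : Integrable (fun y => y ^ 2) (gaussianReal 0 1) :=
  (memLp_id_gaussianReal 2).integrable_sq

variable {Ω : Type*} [MeasurableSpace Ω] {P : Measure Ω}

lemma tendsto_measure_lt_abs_sub [IsFiniteMeasure P] {E : ℕ → Type*} [∀ n, MeasurableSpace (E n)]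
    {μ : ∀ n, Measure (E n)} {V : ∀ n, Ω → E n} {f : ∀ n, E n → ℝ} {c ε : ℝ}
    (hV : ∀ n, AEMeasurable (V n) P) (hVμ : ∀ᶠ n in atTop, P.map (V n) = μ n)
    (hf : ∀ n, Measurable (f n)) (hc : ∀ᵐ ω ∂P, Tendsto (fun n => f n (V n ω)) atTop (𝓝 c))
    (hε : 0 < ε) : Tendsto (fun n => μ n {x | ε < |f n x - c|}) atTop (𝓝 0) := by
  have hP := tendstoInMeasure_iff_norm.1 (tendstoInMeasure_of_tendsto_ae
    (fun n => ((hf n).comp_aemeasurable (hV n)).aestronglyMeasurable) hc) ε hε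
  refine tendsto_of_tendsto_of_tendsto_of_le_of_le' tendsto_const_nhds hP
    (.of_forall fun _ => zero_le) (hVμ.mono fun n hn => ?_)
  rw [← hn, Measure.map_apply_of_aemeasurable (hV n)
    (measurableSet_lt measurable_const ((hf n).sub_const c).abs)]
  exact measure_mono fun ω (hω : ε < _) => hω.le

variable {X : ℕ → Ω → ℝ} {F : ∀ n : ℕ, (Fin n → ℝ) → ℝ} {L : ℝ}

/-- Since `F` is homogeneous, passing from a Gaussian vector `g` to `g / ‖g‖` divides `F` by
`‖g‖²`, and `‖g‖² / n → 1` by the law of large numbers. -/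
lemma ae_tendsto_normalize_of_homogeneous (hlaw : ∀ i, HasLaw (X i) (gaussianReal 0 1) P)
    (hindep : iIndepFun X P) (hFsmul : ∀ n c a, 0 ≤ c → F n (c • a) = c * F n a)
    (hL : ∀ᵐ ω ∂P, Tendsto (fun n : ℕ => F n (fun i => X i ω ^ 2) / n) atTop (𝓝 L)) :
    ∀ᵐ ω ∂P, Tendsto (fun n : ℕ => F n fun i =>
      NormedSpace.normalize (WithLp.toLp 2 fun i : Fin n => X i ω) i ^ 2) atTop (𝓝 L) := by
  filter_upwards [hL, ae_tendsto_sum_div hlaw (fun i j hij => hindep.indepFun hij) (by fun_prop)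
    integrable_sq_gaussianReal] with ω hFω hnorm
  rw [integral_sq_gaussianReal] at hnorm
  have hdiv := hFω.div hnorm one_ne_zero
  rw [div_one] at hdiv
  refine hdiv.congr' ((eventually_ne_atTop 0).mono fun n hn => ?_)
  simp only [Pi.div_apply, div_div_div_cancel_right₀ (Nat.cast_ne_zero (R := ℝ).2 hn)]
  rw [normalize_sq_coord, hFsmul n _ _ (by positivity), EuclideanSpace.real_norm_sq_eq,
    Finset.sum_range, div_eq_inv_mul]

lemma tendsto_measure_lt_abs_sub_of_homogeneous
    (hlaw : ∀ i, HasLaw (X i) (gaussianReal 0 1) P) (hindep : iIndepFun X P)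
    {μ : ∀ n : ℕ, Measure (EuclideanSpace ℝ (Fin n))} (hμ : ∀ n, 1 ≤ n → IsUniformOnSphere (μ n))
    (hF : ∀ n, Measurable (F n)) (hFsmul : ∀ n c a, 0 ≤ c → F n (c • a) = c * F n a)
    (hL : ∀ᵐ ω ∂P, Tendsto (fun n : ℕ => F n (fun i => X i ω ^ 2) / n) atTop (𝓝 L))
    {ε : ℝ} (hε : 0 < ε) :
    Tendsto (fun n => μ n {x | ε < |F n (fun i => x i ^ 2) - L|}) atTop (𝓝 0) := by
  have := (hlaw 0).isProbabilityMeasure_iff.2 inferInstance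
  have hg (n : ℕ) : HasLaw (fun ω => WithLp.toLp 2 fun i : Fin n => X i ω) (stdGaussian _) P :=
    hasLaw_toLp_stdGaussian (fun i : Fin n => hlaw i) (hindep.precomp Fin.val_injective)
  refine tendsto_measure_lt_abs_sub
    (V := fun n ω => NormedSpace.normalize (WithLp.toLp 2 fun i : Fin n => X i ω))
    (f := fun n x => F n fun i => x i ^ 2)
    (fun n => measurable_normalize.comp_aemeasurable (hg n).aemeasurable)
    ((eventually_ge_atTop 1).mono fun n hn => ?_) (fun n => (hF n).comp (by fun_prop))
    (ae_tendsto_normalize_of_homogeneous hlaw hindep hFsmul hL) hε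
  rw [← (hμ n hn).map_normalize_stdGaussian, ← (hg n).map_eq,
    AEMeasurable.map_map_of_aemeasurable measurable_normalize.aemeasurable (hg n).aemeasurable]
  rfl

end Transference

section ChiSquared

/-- The `χ²₁` distribution, the law of the square of a standard normal variable; `chiSqQuantile` is
its quantile function. -/
noncomputable def chiSqMeasure : Measure ℝ := (gaussianReal 0 1).map (· ^ 2)

instance isProbabilityMeasure_chiSqMeasure : IsProbabilityMeasure chiSqMeasure :=
  Measure.isProbabilityMeasure_map (by fun_prop)

lemma chiSqCDF_eq_cdf : chiSqCDF = cdf chiSqMeasure := by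
  ext x
  rw [cdf_eq_real, chiSqMeasure, Measure.real, Measure.map_apply (by fun_prop) measurableSet_Iic]
  rfl

lemma chiSqQuantile_eq_quantile : chiSqQuantile = quantile chiSqMeasure := by
  ext s
  rw [chiSqQuantile, quantile, chiSqCDF_eq_cdf]

lemma neg_integral_Hfun (a b : ℝ) :
    -∫ u in a..b, Hfun u = ∫ s in (1 - b)..(1 - a), quantile chiSqMeasure s := by
  simp only [Hfun, chiSqQuantile_eq_quantile, intervalIntegral.integral_neg, neg_neg,
    intervalIntegral.integral_comp_sub_left]

lemma ae_nonneg_chiSqMeasure : ∀ᵐ x ∂chiSqMeasure, 0 ≤ x :=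
  (ae_map_iff (by fun_prop) measurableSet_Ici).2 (ae_of_all _ sq_nonneg)

lemma integrable_id_chiSqMeasure : Integrable id chiSqMeasure :=
  (integrable_map_measure (by fun_prop) (by fun_prop)).2 integrable_sq_gaussianReal

lemma hasLaw_sq_chiSqMeasure : HasLaw (· ^ 2) chiSqMeasure (gaussianReal 0 1) :=
  ⟨by fun_prop, rfl⟩

end ChiSquared

/-- extreme order statistics.  Let `v_n` be uniform on `S^{n-1}`.  For any
fixed `0 < δ < 1`, the maximum of `‖v_n‖_S²` over subsets `S` of size `⌊δ n⌋` converges in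
probability to `-∫_0^δ H(u) du`, and the minimum converges in probability to
`-∫_{1-δ}^1 H(u) du`. -/
theorem stmt6 (δ : ℝ) (hδ0 : 0 < δ) (hδ1 : δ < 1)
    (μ : ∀ n : ℕ, Measure (EuclideanSpace ℝ (Fin n)))
    (hμ : ∀ n, 1 ≤ n → IsUniformOnSphere (μ n)) :
    (∀ ε : ℝ, 0 < ε →
      Tendsto
        (fun n : ℕ => μ n {x | ε <
            |sSup {r : ℝ | ∃ S : Finset (Fin n), S.card = ⌊δ * n⌋₊ ∧
                r = ∑ i ∈ S, x i ^ 2} -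
              (-∫ u in (0 : ℝ)..δ, Hfun u)|})
        atTop (nhds 0)) ∧
    (∀ ε : ℝ, 0 < ε →
      Tendsto
        (fun n : ℕ => μ n {x | ε <
            |sInf {r : ℝ | ∃ S : Finset (Fin n), S.card = ⌊δ * n⌋₊ ∧
                r = ∑ i ∈ S, x i ^ 2} -
              (-∫ u in (1 - δ : ℝ)..1, Hfun u)|})
        atTop (nhds 0)) := by
  obtain ⟨Ω, _, P, X, -, hlaw, hindep, -⟩ := exists_iid ℕ (gaussianReal 0 1)
  have hlawSq (i : ℕ) : HasLaw (fun ω => X i ω ^ 2) chiSqMeasure P :=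
    hasLaw_sq_chiSqMeasure.fun_comp (hlaw i)
  have hindepSq : Pairwise fun i j => (fun ω => X i ω ^ 2) ⟂ᵢ[P] (fun ω => X j ω ^ 2) :=
    fun i j hij => (hindep.indepFun hij).comp (φ := (· ^ 2)) (ψ := (· ^ 2)) (by fun_prop)
      (by fun_prop)
  have hk (n : ℕ) : ⌊δ * n⌋₊ ≤ n :=
    Nat.floor_le_of_le (mul_le_of_le_one_left n.cast_nonneg hδ1.le)
  have hkδ : Tendsto (fun n : ℕ => (⌊δ * n⌋₊ / n : ℝ)) atTop (𝓝 δ) :=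
    (tendsto_nat_floor_mul_div_atTop hδ0.le).comp tendsto_natCast_atTop_atTop
  have hmax := ae_tendsto_sSup_subsetSums_div ae_nonneg_chiSqMeasure integrable_id_chiSqMeasure
    hlawSq hindepSq hδ0 hδ1 hk hkδ
  have hmin := ae_tendsto_sInf_subsetSums_div ae_nonneg_chiSqMeasure integrable_id_chiSqMeasure
    hlawSq hindepSq hδ0 hδ1 hk hkδ
  rw [neg_integral_Hfun, neg_integral_Hfun, sub_zero, sub_self, sub_sub_cancel]
  exact ⟨fun ε hε => tendsto_measure_lt_abs_sub_of_homogeneous hlaw hindep hμ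
      (fun n => measurable_sSup_subsetSums _) (fun n c a hc => sSup_subsetSums_smul _ hc a) hmax hε,
    fun ε hε => tendsto_measure_lt_abs_sub_of_homogeneous hlaw hindep hμ
      (fun n => measurable_sInf_subsetSums _) (fun n c a hc => sInf_subsetSums_smul _ hc a) hmin hε⟩
end
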